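/- Suppose F is submodular on large sets, i.e. F(X ∩ Y) + F(X ∪ Y) ≤ F(X) + F(Y) for all X, Y ⊆ Fin m with |X ∩ Y| ≥ n. Then the basecondary function 𝓑_F becomes convex upon adding a sufficiently large multiple of the support function of the secondary polytope: there exists C₀ ≥ 0 such that for every C ≥ C₀ the function λ ↦ 𝓑_F(λ) + C·Sec(λ) is convex on ℝ^m. -/

import Mathlib

open MeasureTheory

/-- The `n`-dimensional lattice volume of the convex hull of a set in `ℝⁿ`:
`n!` times its Lebesgue measure. -/
noncomputable def latticeVol (n : ℕ) (s : Set (Fin n → ℝ)) : ℝ :=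
  (n.factorial : ℝ) * (volume (convexHull ℝ s)).toReal

/-- The term `T(λ,γ)` of the basecondary function. -/
noncomputable def Tterm {n m : ℕ} (A : Fin m → (Fin n → ℝ)) (F : Finset (Fin m) → ℝ)
    (lam : Fin m → ℝ) (γ : (Fin n → ℝ) →ᵃ[ℝ] ℝ) : ℝ :=
  γ 0 *
    (F (Finset.univ.filter fun i => 0 ≤ lam i - γ (A i)) -
      F (Finset.univ.filter fun i => 0 < lam i - γ (A i))) *
    latticeVol n (A '' {i | ∀ j, lam j - γ (A j) ≤ lam i - γ (A i)})

/-- The basecondary function `𝓑_F(λ) = Σ_γ T(λ,γ)`, a finitely supported sum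
over all affine maps `γ : ℝⁿ → ℝ`. -/
noncomputable def basecondary {n m : ℕ} (A : Fin m → (Fin n → ℝ))
    (F : Finset (Fin m) → ℝ) (lam : Fin m → ℝ) : ℝ :=
  ∑ᶠ γ : (Fin n → ℝ) →ᵃ[ℝ] ℝ, Tterm A F lam γ

/-- The upper envelope `g_λ` of the configuration `{(A i, λ i)}` lifted to `ℝⁿ × ℝ`. -/
noncomputable def upperEnv {n m : ℕ} (A : Fin m → (Fin n → ℝ)) (lam : Fin m → ℝ)
    (x : Fin n → ℝ) : ℝ :=
  sSup {t : ℝ | (x, t) ∈ convexHull ℝ (Set.range fun i => (A i, lam i))}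

/-- `Sec(λ) = ∫_{conv A(Fin m)} g_λ`: up to a positive constant factor, the support
function of the secondary polytope of the configuration `A (Fin m)`. -/
noncomputable def secondarySupport {n m : ℕ} (A : Fin m → (Fin n → ℝ))
    (lam : Fin m → ℝ) : ℝ :=
  ∫ x in convexHull ℝ (Set.range A), upperEnv A lam x


/-- Lovász extension. -/
noncomputable def LF {m : ℕ} (F : Finset (Fin m) → ℝ) (v : Fin m → ℝ) : ℝ :=
  ∑ c ∈ Finset.univ.image v, c * (F (Finset.univ.filter fun i => c ≤ v i) -
      F (Finset.univ.filter fun i => c < v i))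

lemma LF_exists_y {m : ℕ} (F : Finset (Fin m) → ℝ) (v : Fin m → ℝ) (B : ℝ)
    (hB : ∀ S, |F S| ≤ B) :
    ∃ y : Fin m → ℝ, (∀ S : Finset (Fin m), (∀ i ∈ S, ∀ j, v i ≤ v j → j ∈ S) →
        ∑ i ∈ S, y i = F S - F ∅) ∧ (∀ i, |y i| ≤ 2 * B) ∧
      ((∀ X Y, F (X ∩ Y) + F (X ∪ Y) ≤ F X + F Y) → ∀ S, ∑ i ∈ S, y i ≤ F S - F ∅) := by
  obtain ⟨p, hp, hpv⟩ : ∃ p : Fin m → Fin m, Function.Injective p ∧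
      ∀ i j, p i ≤ p j → v j ≤ v i := by
    refine ⟨(Tuple.sort (fun i => - v i)).symm, Equiv.injective _, ?_⟩
    intro i j hij
    have := Tuple.monotone_sort (fun i => - v i) hij
    simpa using this
  refine ⟨fun i => F (Finset.univ.filter fun j => p j ≤ p i) -
      F (Finset.univ.filter fun j => p j < p i), ?_, ?_, ?_⟩
  · intro S hS
    have hS' : ∀ i ∈ S, ∀ j, p j ≤ p i → j ∈ S := fun i hi j hj => hS i hi j (hpv _ _ hj)
    clear hS
    induction S using Finset.induction_on_max_value p with
    | empty => simp
    | insert a s ha hmax ih =>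
      have h1 : (Finset.univ.filter fun j => p j ≤ p a) = insert a s := by
        ext j
        simp only [Finset.mem_filter, Finset.mem_univ, true_and]
        constructor
        · intro h; exact hS' a (by simp) j h
        · intro h
          rcases Finset.mem_insert.1 h with h | h
          · rw [h]
          · exact hmax j h
      have h2 : (Finset.univ.filter fun j => p j < p a) = s := by
        ext j
        simp only [Finset.mem_filter, Finset.mem_univ, true_and]
        constructor
        · intro h
          rcases Finset.mem_insert.1 (hS' a (by simp) j h.le) with h' | h'
          · rw [h'] at h; exact absurd h (lt_irrefl _)
          · exact h'
        · intro h
          refine lt_of_le_of_ne (hmax j h) fun h' => ha ?_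
          rw [← hp h']; exact h
      rw [Finset.sum_insert ha, ih, h1, h2]
      · ring
      · intro i hi j hj
        rcases Finset.mem_insert.1 (hS' i (by simp [hi]) j hj) with h' | h'
        · exfalso
          rw [h'] at hj
          have := hp (le_antisymm hj (hmax i hi))
          rw [← this] at hi; exact ha hi
        · exact h'
  · intro i
    have h1 := abs_le.1 (hB (Finset.univ.filter fun j => p j ≤ p i))
    have h2 := abs_le.1 (hB (Finset.univ.filter fun j => p j < p i))
    rw [abs_le]; constructor <;> linarith [h1.1, h1.2, h2.1, h2.2]
  · intro hF S
    induction S using Finset.induction_on_max_value p with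
    | empty => simp
    | insert a s ha hmax ih =>
      rw [Finset.sum_insert ha]
      have := hF (insert a s) (Finset.univ.filter fun j => p j < p a)
      have h1 : insert a s ∩ (Finset.univ.filter fun j => p j < p a) = s := by
        ext j
        simp only [Finset.mem_inter, Finset.mem_insert, Finset.mem_filter, Finset.mem_univ,
          true_and]
        constructor
        · rintro ⟨h | h, h'⟩
          · rw [h] at h'; exact absurd h' (lt_irrefl _)
          · exact h
        · intro h
          refine ⟨Or.inr h, lt_of_le_of_ne (hmax j h) fun h' => ha ?_⟩
          rw [← hp h']; exact h
      have h2 : insert a s ∪ (Finset.univ.filter fun j => p j < p a) =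
          (Finset.univ.filter fun j => p j ≤ p a) := by
        ext j
        simp only [Finset.mem_union, Finset.mem_insert, Finset.mem_filter, Finset.mem_univ,
          true_and]
        constructor
        · rintro ((h | h) | h)
          · rw [h]
          · exact hmax j h
          · exact h.le
        · intro h
          rcases h.lt_or_eq with h | h
          · exact Or.inr h
          · exact Or.inl (Or.inl (hp h))
      rw [h1, h2] at this
      linarith

lemma LF_weighted {m : ℕ} (F : Finset (Fin m) → ℝ) (v y : Fin m → ℝ) (φ : ℝ → ℝ)
    (hy : ∀ S : Finset (Fin m), (∀ i ∈ S, ∀ j, v i ≤ v j → j ∈ S) →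
        ∑ i ∈ S, y i = F S - F ∅) :
    ∑ c ∈ Finset.univ.image v, φ c * (F (Finset.univ.filter fun i => c ≤ v i) -
      F (Finset.univ.filter fun i => c < v i)) = ∑ i, φ (v i) * y i := by
  rw [← Finset.sum_fiberwise_of_maps_to (s := Finset.univ) (t := Finset.univ.image v) (g := v)
    (fun i _ => Finset.mem_image_of_mem _ (Finset.mem_univ i))]
  refine Finset.sum_congr rfl fun c _ => ?_
  have h1 := hy (Finset.univ.filter fun i => c ≤ v i) (by
    intro i hi j hj; simp at hi ⊢; linarith)
  have h2 := hy (Finset.univ.filter fun i => c < v i) (by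
    intro i hi j hj; simp at hi ⊢; linarith)
  have h3 : (Finset.univ.filter fun i => c ≤ v i) =
      (Finset.univ.filter fun i => v i = c) ∪ (Finset.univ.filter fun i => c < v i) := by
    ext i; simp [le_iff_eq_or_lt, eq_comm]
  have h4 : Disjoint (Finset.univ.filter fun i => v i = c) (Finset.univ.filter fun i => c < v i) := by
    rw [Finset.disjoint_filter]; intro i _ h; simp [h]
  rw [Finset.sum_congr rfl (g := fun i => φ c * y i), ← Finset.mul_sum]
  · congr 1
    have h5 := h1
    rw [h3, Finset.sum_union h4, h2, ← h3] at h5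
    linarith
  · intro i hi
    simp at hi; rw [hi]

lemma layer_nonneg {m : ℕ} (v z : Fin m → ℝ)
    (hz : ∀ t : ℝ, 0 ≤ ∑ i ∈ Finset.univ.filter (fun i => t ≤ v i), z i)
    (h0 : ∑ i, z i = 0) : 0 ≤ ∑ i, v i * z i := by
  obtain ⟨a, ha⟩ : ∃ a : ℝ, ∀ i, a ≤ v i := by
    obtain ⟨a, ha⟩ := (Set.finite_range v).bddBelow
    exact ⟨a, fun i => ha ⟨i, rfl⟩⟩
  obtain ⟨b, hb⟩ : ∃ b : ℝ, ∀ i, v i ≤ b := by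
    obtain ⟨a, ha⟩ := (Set.finite_range v).bddAbove
    exact ⟨a, fun i => ha ⟨i, rfl⟩⟩
  have key : ∀ i, ∫ t in Set.Ioc a b, (Set.Iic (v i)).indicator (fun _ => z i) t
      = (v i - a) * z i := by
    intro i
    rw [integral_indicator measurableSet_Iic, Measure.restrict_restrict measurableSet_Iic,
      setIntegral_const]
    have : Set.Iic (v i) ∩ Set.Ioc a b = Set.Ioc a (v i) := by
      ext t; simp only [Set.mem_inter_iff, Set.mem_Iic, Set.mem_Ioc]
      have := hb i
      constructor
      · rintro ⟨h1, h2, h3⟩; exact ⟨h2, h1⟩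
      · rintro ⟨h1, h2⟩; exact ⟨h2, h1, by linarith⟩
    rw [this]
    simp [Measure.real, Real.volume_Ioc, ENNReal.toReal_ofReal (sub_nonneg.2 (ha i))]
  have h1 : ∑ i, v i * z i = ∫ t in Set.Ioc a b, ∑ i, (Set.Iic (v i)).indicator (fun _ => z i) t := by
    rw [integral_finsetSum]
    · simp_rw [key, sub_mul]
      rw [Finset.sum_sub_distrib, ← Finset.mul_sum, h0]; simp
    · intro i _
      refine Integrable.indicator ?_ measurableSet_Iic
      exact integrableOn_const (by simp)
  rw [h1]
  refine integral_nonneg fun t => ?_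
  have := hz t
  rw [Finset.sum_filter] at this
  simpa [Set.indicator_apply] using this

lemma LF_ge {m : ℕ} (F : Finset (Fin m) → ℝ) (y : Fin m → ℝ)
    (h1 : ∀ S, ∑ i ∈ S, y i ≤ F S - F ∅) (h2 : ∑ i, y i = F Finset.univ - F ∅) (v : Fin m → ℝ) :
    ∑ i, v i * y i ≤ LF F v := by
  obtain ⟨B, hB⟩ : ∃ B : ℝ, ∀ S, |F S| ≤ B := by
    obtain ⟨a, ha⟩ := (Set.finite_range fun S => |F S|).bddAbove
    exact ⟨a, fun i => ha ⟨i, rfl⟩⟩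
  obtain ⟨y', hy, -, -⟩ := LF_exists_y F v B hB
  have h3 := LF_weighted F v y' (fun c => c) hy
  unfold LF
  rw [h3, ← sub_nonneg, ← Finset.sum_sub_distrib]
  simp_rw [← mul_sub]
  refine layer_nonneg v _ (fun t => ?_) ?_
  · rw [Finset.sum_sub_distrib, hy]
    · linarith [h1 (Finset.univ.filter fun i => t ≤ v i)]
    · intro i hi j hj; simp at hi ⊢; linarith
  · rw [Finset.sum_sub_distrib, hy _ (by simp), h2]; simp

lemma LF_supp {m : ℕ} (F : Finset (Fin m) → ℝ) (B : ℝ)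
    (hB : ∀ S, |F S| ≤ B) (hF : ∀ X Y, F (X ∩ Y) + F (X ∪ Y) ≤ F X + F Y) (v : Fin m → ℝ) :
    ∃ y : Fin m → ℝ, LF F v = ∑ i, v i * y i ∧ (∀ i, |y i| ≤ 2 * B) ∧
      ∀ w, ∑ i, w i * y i ≤ LF F w := by
  obtain ⟨y, hy, hy2, hy3⟩ := LF_exists_y F v B hB
  exact ⟨y, LF_weighted F v y (fun c => c) hy, hy2,
    LF_ge F y (hy3 hF) (hy _ (by simp))⟩

lemma LF_convex {m : ℕ} (F : Finset (Fin m) → ℝ)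
    (hF : ∀ X Y, F (X ∩ Y) + F (X ∪ Y) ≤ F X + F Y) (u v : Fin m → ℝ) (a b : ℝ)
    (ha : 0 ≤ a) (hb : 0 ≤ b) :
    LF F (a • u + b • v) ≤ a * LF F u + b * LF F v := by
  obtain ⟨B, hB⟩ : ∃ B : ℝ, ∀ S, |F S| ≤ B := by
    obtain ⟨a, ha⟩ := (Set.finite_range fun S => |F S|).bddAbove
    exact ⟨a, fun i => ha ⟨i, rfl⟩⟩
  obtain ⟨y, hy, -, hy3⟩ := LF_supp F B hB hF (a • u + b • v)
  rw [hy]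
  have h1 := mul_le_mul_of_nonneg_left (hy3 u) ha
  have h2 := mul_le_mul_of_nonneg_left (hy3 v) hb
  refine le_trans (le_of_eq ?_) (add_le_add h1 h2)
  rw [Finset.mul_sum, Finset.mul_sum, ← Finset.sum_add_distrib]
  refine Finset.sum_congr rfl fun i _ => ?_
  simp; ring

lemma LF_lip {m : ℕ} (F : Finset (Fin m) → ℝ) (B : ℝ)
    (hB : ∀ S, |F S| ≤ B) (hF : ∀ X Y, F (X ∩ Y) + F (X ∪ Y) ≤ F X + F Y) (u v : Fin m → ℝ)
    (ε : ℝ) (h : ∀ i, |u i - v i| ≤ ε) :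
    LF F u ≤ LF F v + m * (2 * B) * ε := by
  obtain ⟨y, hy, hy2, hy3⟩ := LF_supp F B hB hF u
  have h1 : ∑ i, (u i - v i) * y i ≤ ∑ i : Fin m, ε * (2 * B) := by
    refine Finset.sum_le_sum fun i _ => ?_
    refine (le_abs_self _).trans ?_
    rw [abs_mul]
    exact mul_le_mul (h i) (hy2 i) (abs_nonneg _) ((abs_nonneg _).trans (h i))
  have h2 := hy3 v
  simp only [sub_mul, Finset.sum_sub_distrib, Finset.sum_const, Finset.card_univ,
    Fintype.card_fin, nsmul_eq_mul] at h1
  rw [hy]; linarith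

lemma LF_sum_diff {m : ℕ} (F : Finset (Fin m) → ℝ) (v : Fin m → ℝ) (a : ℝ) :
    ∑ c ∈ Finset.univ.image v, (a + c) * (F (Finset.univ.filter fun i => c ≤ v i) -
      F (Finset.univ.filter fun i => c < v i)) = a * (F Finset.univ - F ∅) + LF F v := by
  obtain ⟨B, hB⟩ : ∃ B : ℝ, ∀ S, |F S| ≤ B := by
    obtain ⟨a, ha⟩ := (Set.finite_range fun S => |F S|).bddAbove
    exact ⟨a, fun i => ha ⟨i, rfl⟩⟩
  obtain ⟨y, hy, -, -⟩ := LF_exists_y F v B hB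
  unfold LF
  rw [LF_weighted F v y (fun c => a + c) hy, LF_weighted F v y (fun c => c) hy, ← hy _ (by simp),
    Finset.mul_sum, ← Finset.sum_add_distrib]
  exact Finset.sum_congr rfl fun i _ => by ring

lemma LF_union {m : ℕ} (F : Finset (Fin m) → ℝ) (v : Fin m → ℝ) (S : Finset (Fin m))
    (h : ∀ i, v i ≤ 0) (hS : ∀ i ∈ S, v i = 0) : LF (fun X => F (X ∪ S)) v = LF F v := by
  unfold LF
  refine Finset.sum_congr rfl fun c hc => ?_
  obtain ⟨j, -, rfl⟩ := Finset.mem_image.1 hc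
  rcases (h j).lt_or_eq with hj | hj
  · have h1 : (Finset.univ.filter fun i => v j ≤ v i) ∪ S = Finset.univ.filter fun i => v j ≤ v i := by
      rw [Finset.union_eq_left]
      intro i hi; simp [hS i hi, hj.le]
    have h2 : (Finset.univ.filter fun i => v j < v i) ∪ S = Finset.univ.filter fun i => v j < v i := by
      rw [Finset.union_eq_left]
      intro i hi; simp [hS i hi, hj]
    simp only [h1, h2]
  · rw [hj]; simp
/-- Full-dimensional simplices of the configuration. -/
abbrev Simp {n m : ℕ} (A : Fin m → (Fin n → ℝ)) : Type :=
  {σ : Fin (n + 1) → Fin m // AffineIndependent ℝ (A ∘ σ)}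

noncomputable instance {n m : ℕ} (A : Fin m → (Fin n → ℝ)) : Fintype (Simp A) :=
  Fintype.ofFinite _

/-- Affine basis of a simplex. -/
noncomputable def bas {n m : ℕ} {A : Fin m → (Fin n → ℝ)} (σ : Simp A) :
    AffineBasis (Fin (n + 1)) ℝ (Fin n → ℝ) :=
  ⟨A ∘ σ.1, σ.2, by rw [σ.2.affineSpan_eq_top_iff_card_eq_finrank_add_one]; simp⟩

lemma bas_apply {n m : ℕ} {A : Fin m → (Fin n → ℝ)} (σ : Simp A) (k : Fin (n + 1)) :
    bas σ k = A (σ.1 k) := rfl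

/-- Affine interpolant. -/
noncomputable def interp {n m : ℕ} {A : Fin m → (Fin n → ℝ)} (σ : Simp A) (lam : Fin m → ℝ) :
    (Fin n → ℝ) →ᵃ[ℝ] ℝ :=
  ∑ k, lam (σ.1 k) • (bas σ).coord k

lemma interp_apply {n m : ℕ} {A : Fin m → (Fin n → ℝ)} (σ : Simp A) (lam : Fin m → ℝ)
    (x : Fin n → ℝ) : interp σ lam x = ∑ k, (bas σ).coord k x * lam (σ.1 k) := by
  have h : ∀ (s : Finset (Fin (n + 1))), (∑ k ∈ s, lam (σ.1 k) • (bas σ).coord k) x =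
      ∑ k ∈ s, (bas σ).coord k x * lam (σ.1 k) := by
    intro s
    induction s using Finset.induction_on with
    | empty => simp
    | insert a s ha ih =>
      rw [Finset.sum_insert ha, Finset.sum_insert ha, ← ih]
      simp [mul_comm]
  exact h _

lemma aff_eq {n m : ℕ} {A : Fin m → (Fin n → ℝ)} (σ : Simp A) (γ : (Fin n → ℝ) →ᵃ[ℝ] ℝ)
    (x : Fin n → ℝ) : γ x = ∑ k, (bas σ).coord k x * γ (A (σ.1 k)) := by
  conv_lhs => rw [← (bas σ).affineCombination_coord_eq_self x]
  rw [Finset.map_affineCombination _ _ _ (by simp),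
    Finset.affineCombination_eq_linear_combination _ _ _ (by simp)]
  rfl

lemma interp_vertex {n m : ℕ} {A : Fin m → (Fin n → ℝ)} (σ : Simp A) (lam : Fin m → ℝ)
    (k : Fin (n + 1)) : interp σ lam (A (σ.1 k)) = lam (σ.1 k) := by
  rw [interp_apply, ← bas_apply σ k]
  simp [AffineBasis.coord_apply]

lemma coord_cont {n m : ℕ} {A : Fin m → (Fin n → ℝ)} (σ : Simp A) (k : Fin (n + 1)) :
    Continuous ((bas σ).coord k) := AffineMap.continuous_of_finiteDimensional _

/-- Chambers. -/
def cell {n m : ℕ} {A : Fin m → (Fin n → ℝ)} (Θ : Finset (Simp A)) : Set (Fin n → ℝ) :=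
  {x | ∀ σ, σ ∈ Θ ↔ ∀ k, 0 < (bas σ).coord k x}

lemma cell_meas {n m : ℕ} {A : Fin m → (Fin n → ℝ)} (Θ : Finset (Simp A)) :
    MeasurableSet (cell Θ) := by
  have : cell Θ = ⋂ σ, {x | σ ∈ Θ ↔ ∀ k, 0 < (bas σ).coord k x} := by
    ext x; simp [cell]
  rw [this]
  refine MeasurableSet.iInter fun σ => ?_
  have h : MeasurableSet {x | ∀ k, 0 < (bas σ).coord k x} := by
    have : {x | ∀ k, 0 < (bas σ).coord k x} = ⋂ k, {x | 0 < (bas σ).coord k x} := by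
      ext x; simp
    rw [this]
    exact MeasurableSet.iInter fun k => measurableSet_lt measurable_const (coord_cont σ k).measurable
  by_cases hσ : σ ∈ Θ
  · simpa [hσ] using h
  · have := h.compl
    simpa [hσ, Set.compl_def] using this

lemma cell_disj {n m : ℕ} {A : Fin m → (Fin n → ℝ)} {Θ Θ' : Finset (Simp A)} (x : Fin n → ℝ)
    (h : x ∈ cell Θ) (h' : x ∈ cell Θ') : Θ = Θ' := by
  ext σ; rw [h σ, h' σ]

lemma exists_cell {n m : ℕ} {A : Fin m → (Fin n → ℝ)} (x : Fin n → ℝ) :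
    ∃ Θ : Finset (Simp A), x ∈ cell Θ := by
  classical
  exact ⟨Finset.univ.filter fun σ => ∀ k, 0 < (bas σ).coord k x, fun σ => by simp⟩

/-- Generic points. -/
def Gen {n m : ℕ} (A : Fin m → (Fin n → ℝ)) : Set (Fin n → ℝ) :=
  {x | (∀ (σ : Simp A) k, (bas σ).coord k x ≠ 0) ∧
    (x ∈ convexHull ℝ (Set.range A) → ∃ σ : Simp A, ∀ k, 0 < (bas σ).coord k x)}

lemma coord_of_comb {n m : ℕ} {A : Fin m → (Fin n → ℝ)} (σ : Simp A) (w : Fin (n + 1) → ℝ)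
    (x : Fin n → ℝ) (hw : ∑ k, w k = 1) (hx : ∑ k, w k • A (σ.1 k) = x) (k : Fin (n + 1)) :
    (bas σ).coord k x = w k := by
  have := (bas σ).coord_apply_combination_of_mem (Finset.mem_univ k) hw
  rw [Finset.affineCombination_eq_linear_combination _ _ _ hw] at this
  rw [← hx]; exact this

lemma ae_gen {n m : ℕ} (A : Fin m → (Fin n → ℝ)) : ∀ᵐ x, x ∈ Gen A := by
  have h1 : ∀ᵐ x : Fin n → ℝ, ∀ (σ : Simp A) k, (bas σ).coord k x ≠ 0 := by
    rw [ae_all_iff]; intro σ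
    rw [ae_all_iff]; intro k
    let s : AffineSubspace ℝ (Fin n → ℝ) :=
      (AffineSubspace.mk' (0 : ℝ) ⊥).comap ((bas σ).coord k)
    have hs : ∀ x, x ∈ s ↔ (bas σ).coord k x = 0 := by
      intro x; simp [s, AffineSubspace.mem_comap, AffineSubspace.mem_mk']
    have := Measure.addHaar_affineSubspace volume s (by
      intro h
      have h2 : bas σ k ∈ s := by rw [h]; trivial
      rw [hs] at h2; simp at h2)
    rw [ae_iff]
    convert this using 2
    ext x; simpa using (hs x).symm
  have h2 : ∀ᵐ x : Fin n → ℝ, ∀ T : Finset (Fin m), affineSpan ℝ (A '' (T : Set (Fin m))) ≠ ⊤ →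
      x ∉ affineSpan ℝ (A '' (T : Set (Fin m))) := by
    rw [ae_all_iff]; intro T
    by_cases hT : affineSpan ℝ (A '' (T : Set (Fin m))) = ⊤
    · simp [hT]
    · have := Measure.addHaar_affineSubspace volume _ hT
      rw [ae_iff]
      convert this using 2
      ext x; simp [hT]
  filter_upwards [h1, h2] with x hx1 hx2
  refine ⟨hx1, fun hx => ?_⟩
  obtain ⟨ι, _, z, w, hz, hi, hw, hw1, hwx⟩ := eq_pos_convex_span_of_mem_convexHull hx
  have hz' : ∀ i, ∃ j, A j = z i := fun i => hz ⟨i, rfl⟩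
  choose g hg using hz'
  classical
  have hr : A '' ((Finset.univ.image g : Finset (Fin m)) : Set (Fin m)) = Set.range z := by
    ext y; simp [hg]
  have htop : affineSpan ℝ (Set.range z) = ⊤ := by
    by_contra hne
    have := hx2 (Finset.univ.image g)
    rw [hr] at this
    apply this hne
    rw [← hwx, ← Finset.affineCombination_eq_linear_combination _ _ _ hw1]
    exact affineCombination_mem_affineSpan hw1 z
  rw [hi.affineSpan_eq_top_iff_card_eq_finrank_add_one] at htop
  simp at htop
  let e : Fin (n + 1) ≃ ι := (Fintype.equivFinOfCardEq htop).symm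
  have hAe : A ∘ (g ∘ e) = z ∘ e := by ext k; simp [hg]
  refine ⟨⟨g ∘ e, ?_⟩, fun k => ?_⟩
  · rw [hAe]; exact (affineIndependent_equiv e).2 hi
  · rw [coord_of_comb _ (w ∘ e) x]
    · exact hw _
    · rw [← hw1]; exact Equiv.sum_comp e w
    · rw [← hwx, ← Equiv.sum_comp e]; simp [hg]

/-- feasibility -/
def Feas {n m : ℕ} {A : Fin m → (Fin n → ℝ)} (σ : Simp A) (lam : Fin m → ℝ) : Prop :=
  ∀ j, lam j ≤ interp σ lam (A j)

lemma pivot {n m : ℕ} {A : Fin m → (Fin n → ℝ)} (x : Fin n → ℝ)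
    (hx : ∀ (σ : Simp A) k, (bas σ).coord k x ≠ 0) (Θ : Finset (Simp A)) (hΘ : Θ.Nonempty)
    (hxΘ : x ∈ cell Θ) (lam : Fin m → ℝ) : ∃ τ ∈ Θ, Feas τ lam := by
  obtain ⟨τ, hτ, hmax⟩ := Finset.exists_max_image Θ (fun σ => interp σ lam x) hΘ
  refine ⟨τ, hτ, ?_⟩
  by_contra hcon
  unfold Feas at hcon
  push Not at hcon
  obtain ⟨j, hj⟩ := hcon
  set d : Fin (n + 1) → ℝ := fun k => (bas τ).coord k (A j) with hd
  set b : Fin (n + 1) → ℝ := fun k => (bas τ).coord k x with hb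
  have hbpos : ∀ k, 0 < b k := (hxΘ τ).1 hτ
  have hd1 : ∑ k, d k = 1 := by simp [hd]
  have hb1 : ∑ k, b k = 1 := by simp [hb]
  have hne : (Finset.univ.filter fun k => 0 < d k).Nonempty := by
    by_contra h
    rw [Finset.not_nonempty_iff_eq_empty, Finset.filter_eq_empty_iff] at h
    have : ∑ k, d k ≤ 0 := Finset.sum_nonpos fun k hk => not_lt.1 (h hk)
    linarith
  obtain ⟨k0, hk0, hmin⟩ := Finset.exists_min_image _ (fun k => b k / d k) hne
  simp only [Finset.mem_filter, Finset.mem_univ, true_and] at hk0 hmin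
  set θ := b k0 / d k0 with hθ
  have hθpos : 0 < θ := div_pos (hbpos _) hk0
  have hθ0 : b k0 - θ * d k0 = 0 := by rw [hθ]; field_simp; ring
  have hind : AffineIndependent ℝ (A ∘ Function.update τ.1 k0 j) := by
    rw [Function.comp_update]
    refine τ.2.affineIndependent_update_of_notMem_affineSpan fun hmem => ?_
    have h0 : ∀ y ∈ affineSpan ℝ ((A ∘ τ.1) '' {x | x ≠ k0}), (bas τ).coord k0 y = 0 := by
      let s : AffineSubspace ℝ (Fin n → ℝ) :=
        (AffineSubspace.mk' (0 : ℝ) ⊥).comap ((bas τ).coord k0)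
      have hs : ∀ x, x ∈ s ↔ (bas τ).coord k0 x = 0 := by
        intro x; simp [s, AffineSubspace.mem_comap, AffineSubspace.mem_mk']
      have hle : affineSpan ℝ ((A ∘ τ.1) '' {x | x ≠ k0}) ≤ s := by
        rw [affineSpan_le]
        rintro _ ⟨k, hk, rfl⟩
        refine (hs _).2 ?_
        exact (bas τ).coord_apply_ne (Ne.symm hk)
      intro y hy
      exact (hs y).1 (hle hy)
    have := h0 _ hmem
    exact hk0.ne' this
  let σ : Simp A := ⟨Function.update τ.1 k0 j, hind⟩
  let w : Fin (n + 1) → ℝ := Function.update (fun k => b k - θ * d k) k0 θ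
  have hsum : ∀ {M : Type} [AddCommGroup M] [Module ℝ M] (f : Fin m → M),
      ∑ k, w k • f (σ.1 k) = ∑ k, (b k - θ * d k) • f (τ.1 k) + θ • f j := by
    intro M _ _ f
    rw [← Finset.add_sum_erase _ _ (Finset.mem_univ k0),
      ← Finset.add_sum_erase (a := k0) (f := fun k => (b k - θ * d k) • f (τ.1 k)) _
      (Finset.mem_univ k0)]
    have : ∑ k ∈ Finset.univ.erase k0, w k • f (σ.1 k) =
        ∑ k ∈ Finset.univ.erase k0, (b k - θ * d k) • f (τ.1 k) := by
      refine Finset.sum_congr rfl fun k hk => ?_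
      have hk' := Finset.ne_of_mem_erase hk
      simp [w, σ, hk']
    rw [this, hθ0]
    simp [w, σ, add_comm]
  have hw1 : ∑ k, w k = 1 := by
    have := hsum (fun _ => (1 : ℝ))
    simp only [smul_eq_mul, mul_one, Finset.sum_sub_distrib, ← Finset.mul_sum, hd1, hb1] at this
    linarith
  have hxb : ∑ k, b k • A (τ.1 k) = x := (bas τ).linear_combination_coord_eq_self x
  have hxd : ∑ k, d k • A (τ.1 k) = A j := (bas τ).linear_combination_coord_eq_self (A j)
  have hwx : ∑ k, w k • A (σ.1 k) = x := by
    rw [hsum A]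
    simp only [sub_smul, mul_smul, Finset.sum_sub_distrib, ← Finset.smul_sum, hxb, hxd]
    simp
  have hco := coord_of_comb σ w x hw1 hwx
  have hσ : σ ∈ Θ := by
    rw [hxΘ σ]
    intro k
    refine lt_of_le_of_ne ?_ (hx σ k).symm
    rw [hco]
    by_cases hk : k = k0
    · simp [w, hk, hθpos.le]
    · simp only [w, Function.update_of_ne hk]
      by_cases hdk : 0 < d k
      · have := hmin k hdk
        rw [le_div_iff₀ hdk] at this
        linarith
      · have := mul_nonpos_of_nonneg_of_nonpos hθpos.le (not_lt.1 hdk)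
        linarith [hbpos k]
  have h1 := hmax σ hσ
  have h2 : interp σ lam x = interp τ lam x + θ * (lam j - interp τ lam (A j)) := by
    rw [interp_apply σ, interp_apply τ, interp_apply τ]
    simp_rw [hco]
    have := hsum lam
    simp only [smul_eq_mul] at this
    rw [this, mul_sub, Finset.mul_sum]
    simp only [sub_mul, Finset.sum_sub_distrib, mul_assoc]
    ring
  have h3 := mul_pos hθpos (sub_pos.2 hj)
  linarith

lemma mem_conv_iff {n m : ℕ} {A : Fin m → (Fin n → ℝ)} (x : Fin n → ℝ) (Θ : Finset (Simp A))
    (hx : x ∈ cell Θ) (τ : Simp A) (hτ : τ ∈ Θ) (lam : Fin m → ℝ) (hf : Feas τ lam)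
    (γ : (Fin n → ℝ) →ᵃ[ℝ] ℝ) :
    x ∈ convexHull ℝ (A '' {i | ∀ j, lam j - γ (A j) ≤ lam i - γ (A i)}) ↔
      ∃ d : ℝ, γ = interp τ lam + AffineMap.const ℝ _ d := by
  have hpos := (hx τ).1 hτ
  constructor
  · intro h
    obtain ⟨y, hy⟩ := convexHull_nonempty_iff.1 ⟨x, h⟩
    obtain ⟨i0, hi0, -⟩ := hy
    set M := lam i0 - γ (A i0) with hM
    have hge : ∀ j, lam j ≤ γ (A j) + M := fun j => by have := hi0 j; linarith
    have hS : ∀ i ∈ {i | ∀ j, lam j - γ (A j) ≤ lam i - γ (A i)}, γ (A i) + M = lam i := by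
      intro i hi
      have h1 := hi i0
      have h2 := hi0 i
      linarith
    have h1 : γ x + M ≤ interp τ lam x := by
      have hc : Convex ℝ ((γ - interp τ lam) ⁻¹' Set.Iic (-M)) :=
        (convex_Iic (-M)).affine_preimage (γ - interp τ lam)
      have := convexHull_min (s := A '' {i | ∀ j, lam j - γ (A j) ≤ lam i - γ (A i)}) (by
        rintro _ ⟨i, hi, rfl⟩
        simp only [Set.mem_preimage, Set.mem_Iic, AffineMap.coe_sub, Pi.sub_apply]
        have := hS i hi
        have := hf i
        linarith) hc h
      simp only [Set.mem_preimage, Set.mem_Iic, AffineMap.coe_sub, Pi.sub_apply] at this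
      linarith
    have hs1 : ∑ k, (bas τ).coord k x = 1 := by simp
    have h2 : ∑ k, (bas τ).coord k x * (γ (A (τ.1 k)) + M - lam (τ.1 k)) ≤ 0 := by
      rw [aff_eq τ γ x, interp_apply] at h1
      simp only [mul_sub, mul_add, Finset.sum_sub_distrib, Finset.sum_add_distrib,
        ← Finset.sum_mul, hs1]
      linarith
    have h3 : ∀ k ∈ Finset.univ, 0 ≤ (bas τ).coord k x * (γ (A (τ.1 k)) + M - lam (τ.1 k)) :=
      fun k _ => mul_nonneg (hpos k).le (by linarith [hge (τ.1 k)])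
    have h4 := (Finset.sum_eq_zero_iff_of_nonneg h3).1 (le_antisymm h2 (Finset.sum_nonneg h3))
    refine ⟨-M, ?_⟩
    ext y
    simp only [AffineMap.coe_add, Pi.add_apply, AffineMap.const_apply]
    rw [aff_eq τ γ y, aff_eq τ (interp τ lam) y]
    have hy1 : ∑ k, (bas τ).coord k y = 1 := by simp
    have : ∑ k, (bas τ).coord k y * (interp τ lam (A (τ.1 k))) =
        ∑ k, (bas τ).coord k y * (γ (A (τ.1 k)) + M) := by
      refine Finset.sum_congr rfl fun k hk => ?_
      rw [interp_vertex]
      rcases mul_eq_zero.1 (h4 k hk) with h | h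
      · exact absurd h (hpos k).ne'
      · congr 1; linarith
    rw [this]
    simp only [mul_add, Finset.sum_add_distrib, ← Finset.sum_mul, hy1]
    ring
  · rintro ⟨d, rfl⟩
    rw [← (bas τ).linear_combination_coord_eq_self x]
    refine (convex_convexHull ℝ _).sum_mem (fun k _ => (hpos k).le) (by simp) fun k _ => ?_
    refine subset_convexHull ℝ _ ⟨τ.1 k, fun j => ?_, rfl⟩
    simp only [AffineMap.coe_add, Pi.add_apply, AffineMap.const_apply, interp_vertex]
    linarith [hf j]

lemma upperEnv_eq {n m : ℕ} {A : Fin m → (Fin n → ℝ)} (x : Fin n → ℝ) (Θ : Finset (Simp A))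
    (hx : x ∈ cell Θ) (τ : Simp A) (hτ : τ ∈ Θ) (lam : Fin m → ℝ) (hf : Feas τ lam) :
    upperEnv A lam x = interp τ lam x := by
  have hpos := (hx τ).1 hτ
  refine IsGreatest.csSup_eq ⟨?_, ?_⟩
  · have : (x, interp τ lam x) = ∑ k, (bas τ).coord k x • (A (τ.1 k), lam (τ.1 k)) := by
      ext1
      · rw [Prod.fst_sum]
        exact ((bas τ).linear_combination_coord_eq_self x).symm
      · rw [Prod.snd_sum]
        exact interp_apply _ _ _
    rw [Set.mem_ofPred_eq, this]
    refine (convex_convexHull ℝ _).sum_mem (fun k _ => (hpos k).le) (by simp) fun k _ => ?_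
    exact subset_convexHull ℝ _ ⟨τ.1 k, rfl⟩
  · intro t ht
    let φ : ((Fin n → ℝ) × ℝ) →ᵃ[ℝ] ℝ :=
      (LinearMap.snd ℝ (Fin n → ℝ) ℝ).toAffineMap -
        (interp τ lam).comp (LinearMap.fst ℝ (Fin n → ℝ) ℝ).toAffineMap
    have hφ : ∀ y s, φ (y, s) = s - interp τ lam y := fun y s => rfl
    have hc : Convex ℝ (φ ⁻¹' Set.Iic 0) := (convex_Iic 0).affine_preimage φ
    have := convexHull_min (s := Set.range fun i => (A i, lam i)) (by
      rintro _ ⟨i, rfl⟩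
      simp only [Set.mem_preimage, Set.mem_Iic, hφ]
      linarith [hf i]) hc ht
    simp only [Set.mem_preimage, Set.mem_Iic, hφ] at this
    linarith

open Classical in
/-- Relevant chambers. -/
noncomputable def goodCells {n m : ℕ} (A : Fin m → (Fin n → ℝ)) : Finset (Finset (Simp A)) :=
  Finset.univ.filter fun Θ => Θ.Nonempty ∧ volume (cell Θ) ≠ 0

lemma mem_goodCells {n m : ℕ} {A : Fin m → (Fin n → ℝ)} {Θ : Finset (Simp A)} :
    Θ ∈ goodCells A ↔ Θ.Nonempty ∧ volume (cell Θ) ≠ 0 := by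
  simp [goodCells]

lemma exists_feas {n m : ℕ} {A : Fin m → (Fin n → ℝ)} {Θ : Finset (Simp A)}
    (hΘ : Θ ∈ goodCells A) (lam : Fin m → ℝ) : ∃ τ ∈ Θ, Feas τ lam := by
  rw [mem_goodCells] at hΘ
  obtain ⟨x, hx, hx'⟩ : ∃ x, x ∈ cell Θ ∧ x ∈ Gen A := by
    by_contra h
    push Not at h
    apply hΘ.2
    exact measure_mono_null (fun x hx => h x hx) (ae_iff.1 (ae_gen A))
  exact pivot x hx'.1 Θ hΘ.1 hx lam

lemma ae_cell {n m : ℕ} (A : Fin m → (Fin n → ℝ)) : ∀ᵐ x, x ∈ convexHull ℝ (Set.range A) →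
    ∃ Θ ∈ goodCells A, x ∈ cell Θ := by
  have h : ∀ᵐ x : Fin n → ℝ, ∀ Θ : Finset (Simp A), volume (cell Θ) = 0 → x ∉ cell Θ := by
    rw [ae_all_iff]
    intro Θ
    by_cases h0 : volume (cell Θ) = 0
    · simp only [h0, forall_const]
      exact measure_eq_zero_iff_ae_notMem.1 h0
    · simp [h0]
  filter_upwards [h, ae_gen A] with x hx hg hc
  obtain ⟨Θ, hΘ⟩ := exists_cell (A := A) x
  refine ⟨Θ, ?_, hΘ⟩
  rw [mem_goodCells]
  refine ⟨?_, fun h0 => hx Θ h0 hΘ⟩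
  obtain ⟨σ, hσ⟩ := hg.2 hc
  exact ⟨σ, (hΘ σ).2 hσ⟩

lemma cell_subset {n m : ℕ} {A : Fin m → (Fin n → ℝ)} {Θ : Finset (Simp A)}
    (hΘ : Θ.Nonempty) : cell Θ ⊆ convexHull ℝ (Set.range A) := by
  intro x hx
  obtain ⟨τ, hτ⟩ := hΘ
  rw [← (bas τ).linear_combination_coord_eq_self x]
  refine (convex_convexHull ℝ _).sum_mem (fun k _ => ((hx τ).1 hτ k).le) (by simp) fun k _ => ?_
  exact subset_convexHull ℝ _ ⟨τ.1 k, rfl⟩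

lemma conv_compact {n m : ℕ} (A : Fin m → (Fin n → ℝ)) :
    IsCompact (convexHull ℝ (Set.range A)) := (Set.finite_range A).isCompact_convexHull ℝ

lemma cell_fin {n m : ℕ} {A : Fin m → (Fin n → ℝ)} {Θ : Finset (Simp A)}
    (hΘ : Θ.Nonempty) : volume (cell Θ) ≠ ⊤ :=
  ((measure_mono (cell_subset hΘ)).trans_lt (conv_compact A).measure_lt_top).ne

lemma cell_int {n m : ℕ} {A : Fin m → (Fin n → ℝ)} {Θ : Finset (Simp A)}
    (hΘ : Θ.Nonempty) (γ : (Fin n → ℝ) →ᵃ[ℝ] ℝ) : IntegrableOn γ (cell Θ) :=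
  ((AffineMap.continuous_of_finiteDimensional γ).continuousOn.integrableOn_compact
    (conv_compact A)).mono_set (cell_subset hΘ)

lemma cells_pairwise {n m : ℕ} {A : Fin m → (Fin n → ℝ)} (s : Finset (Finset (Simp A))) :
    (s : Set (Finset (Simp A))).PairwiseDisjoint cell := by
  intro Θ _ Θ' _ hne
  rw [Function.onFun, Set.disjoint_left]
  intro x h h'
  exact hne (cell_disj x h h')

open Classical in
lemma vol_formula {n m : ℕ} (A : Fin m → (Fin n → ℝ)) (lam : Fin m → ℝ)
    (a : Finset (Simp A) → ((Fin n → ℝ) →ᵃ[ℝ] ℝ))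
    (ha : ∀ Θ ∈ goodCells A, ∃ τ ∈ Θ, Feas τ lam ∧ a Θ = interp τ lam)
    (γ : (Fin n → ℝ) →ᵃ[ℝ] ℝ) :
    (volume (convexHull ℝ (A '' {i | ∀ j, lam j - γ (A j) ≤ lam i - γ (A i)}))).toReal =
      ∑ Θ ∈ goodCells A, if γ ∈ Set.range (fun d : ℝ => a Θ + AffineMap.const ℝ _ d)
        then (volume (cell Θ)).toReal else 0 := by
  rw [← Finset.sum_filter, ← ENNReal.toReal_sum, ← measure_biUnion_finset]
  · congr 1
    refine measure_congr ?_
    filter_upwards [ae_cell A] with x hx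
    refine propext ?_
    change x ∈ convexHull ℝ _ ↔ x ∈ ⋃ Θ ∈ _, cell Θ
    simp only [Set.mem_iUnion, Finset.mem_filter, exists_prop]
    constructor
    · intro h
      obtain ⟨Θ, hΘ, hxΘ⟩ := hx (convexHull_mono (Set.image_subset_range _ _) h)
      obtain ⟨τ, hτ, hf, hae⟩ := ha Θ hΘ
      refine ⟨Θ, ⟨hΘ, ?_⟩, hxΘ⟩
      obtain ⟨d, hd⟩ := (mem_conv_iff x Θ hxΘ τ hτ lam hf γ).1 h
      exact ⟨d, by rw [hd, hae]⟩
    · rintro ⟨Θ, ⟨hΘ, d, hd⟩, hxΘ⟩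
      obtain ⟨τ, hτ, hf, hae⟩ := ha Θ hΘ
      exact (mem_conv_iff x Θ hxΘ τ hτ lam hf γ).2 ⟨d, by rw [← hd, hae]⟩
  · exact cells_pairwise _
  · exact fun Θ _ => cell_meas Θ
  · intro Θ hΘ
    exact cell_fin (mem_goodCells.1 (Finset.mem_filter.1 hΘ).1).1

lemma sec_formula {n m : ℕ} (A : Fin m → (Fin n → ℝ)) (lam : Fin m → ℝ)
    (a : Finset (Simp A) → ((Fin n → ℝ) →ᵃ[ℝ] ℝ))
    (ha : ∀ Θ ∈ goodCells A, ∃ τ ∈ Θ, Feas τ lam ∧ a Θ = interp τ lam) :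
    secondarySupport A lam = ∑ Θ ∈ goodCells A, ∫ x in cell Θ, a Θ x := by
  have hE : ∀ Θ ∈ goodCells A, Set.EqOn (upperEnv A lam) (a Θ) (cell Θ) := by
    intro Θ hΘ x hx
    obtain ⟨τ, hτ, hf, hae⟩ := ha Θ hΘ
    rw [hae]; exact upperEnv_eq x Θ hx τ hτ lam hf
  unfold secondarySupport
  have : convexHull ℝ (Set.range A) =ᵐ[volume] ⋃ Θ ∈ goodCells A, cell Θ := by
    filter_upwards [ae_cell A] with x hx
    refine propext ?_
    change x ∈ convexHull ℝ _ ↔ x ∈ ⋃ Θ ∈ _, cell Θ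
    simp only [Set.mem_iUnion, exists_prop]
    exact ⟨hx, fun ⟨Θ, hΘ, h⟩ => cell_subset (mem_goodCells.1 hΘ).1 h⟩
  rw [setIntegral_congr_set this, integral_biUnion_finset]
  · exact Finset.sum_congr rfl fun Θ hΘ => setIntegral_congr_fun (cell_meas Θ) (hE Θ hΘ)
  · exact fun Θ _ => cell_meas Θ
  · exact cells_pairwise _
  · intro Θ hΘ
    exact (integrableOn_congr_fun (hE Θ hΘ) (cell_meas Θ)).2 (cell_int (mem_goodCells.1 hΘ).1 _)

lemma base_formula {n m : ℕ} (A : Fin m → (Fin n → ℝ)) (F : Finset (Fin m) → ℝ) (lam : Fin m → ℝ)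
    (a : Finset (Simp A) → ((Fin n → ℝ) →ᵃ[ℝ] ℝ))
    (ha : ∀ Θ ∈ goodCells A, ∃ τ ∈ Θ, Feas τ lam ∧ a Θ = interp τ lam) :
    basecondary A F lam = ∑ Θ ∈ goodCells A, (n.factorial * (volume (cell Θ)).toReal) *
      (a Θ 0 * (F Finset.univ - F ∅) + LF F (fun i => lam i - a Θ (A i))) := by
  classical
  let D : ((Fin n → ℝ) →ᵃ[ℝ] ℝ) → ℝ := fun γ => γ 0 *
    (F (Finset.univ.filter fun i => 0 ≤ lam i - γ (A i)) -
      F (Finset.univ.filter fun i => 0 < lam i - γ (A i)))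
  have hT : ∀ γ, Tterm A F lam γ = ∑ Θ ∈ goodCells A,
      if γ ∈ Set.range (fun d : ℝ => a Θ + AffineMap.const ℝ _ d) then
        (n.factorial * (volume (cell Θ)).toReal) * D γ else 0 := by
    intro γ
    unfold Tterm latticeVol
    rw [vol_formula A lam a ha γ, Finset.mul_sum, Finset.mul_sum]
    refine Finset.sum_congr rfl fun Θ _ => ?_
    split_ifs
    · simp only [D]; ring
    · simp
  have hinj : ∀ Θ, Function.Injective (fun d : ℝ => a Θ + AffineMap.const ℝ (Fin n → ℝ) d) := by
    intro Θ d d' h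
    have := DFunLike.congr_fun h 0
    simpa using this
  have hD : ∀ Θ (d : ℝ), D (a Θ + AffineMap.const ℝ _ d) = (a Θ 0 + d) *
      (F (Finset.univ.filter fun i => d ≤ lam i - a Θ (A i)) -
      F (Finset.univ.filter fun i => d < lam i - a Θ (A i))) := by
    intro Θ d
    have e0 : ∀ x, (a Θ + AffineMap.const ℝ (Fin n → ℝ) d) x = a Θ x + d := fun x => rfl
    have e1 : (Finset.univ.filter fun i => 0 ≤ lam i - (a Θ + AffineMap.const ℝ (Fin n → ℝ) d) (A i)) =
        (Finset.univ.filter fun i => d ≤ lam i - a Θ (A i)) :=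
      Finset.filter_congr fun i _ => by rw [e0]; constructor <;> intro h <;> linarith
    have e2 : (Finset.univ.filter fun i => 0 < lam i - (a Θ + AffineMap.const ℝ (Fin n → ℝ) d) (A i)) =
        (Finset.univ.filter fun i => d < lam i - a Θ (A i)) :=
      Finset.filter_congr fun i _ => by rw [e0]; constructor <;> intro h <;> linarith
    simp only [D]
    rw [e1, e2, e0]
  have hsupp : ∀ Θ (d : ℝ), D (a Θ + AffineMap.const ℝ _ d) ≠ 0 →
      d ∈ Finset.univ.image (fun i => lam i - a Θ (A i)) := by
    intro Θ d h
    by_contra hd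
    apply h
    rw [hD]
    have : (Finset.univ.filter fun i => d ≤ lam i - a Θ (A i)) =
        (Finset.univ.filter fun i => d < lam i - a Θ (A i)) := by
      refine Finset.filter_congr fun i _ => ⟨fun h => lt_of_le_of_ne h ?_, le_of_lt⟩
      intro h'
      exact hd (Finset.mem_image.2 ⟨i, Finset.mem_univ i, h'.symm⟩)
    rw [this]; simp
  unfold basecondary
  simp_rw [hT]
  rw [finsum_sum_comm]
  · refine Finset.sum_congr rfl fun Θ _ => ?_
    have h1 : ∑ᶠ γ, (if γ ∈ Set.range (fun d : ℝ => a Θ + AffineMap.const ℝ _ d) then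
        (n.factorial * (volume (cell Θ)).toReal) * D γ else 0) =
        ∑ᶠ γ ∈ Set.range (fun d : ℝ => a Θ + AffineMap.const ℝ _ d),
          (n.factorial * (volume (cell Θ)).toReal) * D γ := by
      refine finsum_congr fun γ => ?_
      rw [finsum_eq_if]
    rw [h1, finsum_mem_range (hinj Θ),
      finsum_eq_sum_of_support_subset (s := Finset.univ.image (fun i => lam i - a Θ (A i)))]
    · rw [← Finset.mul_sum]
      congr 1
      rw [← LF_sum_diff]
      exact Finset.sum_congr rfl fun d _ => hD Θ d
    · intro d hd
      exact hsupp Θ d (right_ne_zero_of_mul hd)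
  · intro Θ _
    refine Set.Finite.subset (((Finset.univ.image (fun i => lam i - a Θ (A i))).finite_toSet).image
      (fun d : ℝ => a Θ + AffineMap.const ℝ _ d)) ?_
    intro γ hγ
    rw [Function.mem_support] at hγ
    split_ifs at hγ with h
    · obtain ⟨d, rfl⟩ := h
      exact ⟨d, hsupp Θ d (right_ne_zero_of_mul hγ), rfl⟩
    · exact absurd rfl hγ

/-- Residual. -/
noncomputable def Rsd {n m : ℕ} {A : Fin m → (Fin n → ℝ)} (σ : Simp A) (lam : Fin m → ℝ) :
    Fin m → ℝ := fun i => lam i - interp σ lam (A i)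

/-- `F` shifted by the vertex set of a simplex. -/
def Fsh {n m : ℕ} {A : Fin m → (Fin n → ℝ)} (F : Finset (Fin m) → ℝ) (σ : Simp A) :
    Finset (Fin m) → ℝ := fun X => F (X ∪ Finset.univ.image σ.1)

/-- The convex piece attached to a simplex. -/
noncomputable def Hpc {n m : ℕ} {A : Fin m → (Fin n → ℝ)} (F : Finset (Fin m) → ℝ) (σ : Simp A)
    (lam : Fin m → ℝ) : ℝ :=
  interp σ lam 0 * (F Finset.univ - F ∅) + LF (Fsh F σ) (Rsd σ lam)

lemma interp_comb {n m : ℕ} {A : Fin m → (Fin n → ℝ)} (σ : Simp A) (u v : Fin m → ℝ) (a b : ℝ)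
    (x : Fin n → ℝ) : interp σ (a • u + b • v) x = a * interp σ u x + b * interp σ v x := by
  simp only [interp_apply, Finset.mul_sum, ← Finset.sum_add_distrib]
  refine Finset.sum_congr rfl fun k _ => ?_
  simp; ring

lemma Fsh_sub {n m : ℕ} {A : Fin m → (Fin n → ℝ)} (F : Finset (Fin m) → ℝ)
    (hsub : ∀ X Y : Finset (Fin m), n ≤ (X ∩ Y).card →
      F (X ∩ Y) + F (X ∪ Y) ≤ F X + F Y) (σ : Simp A) (X Y : Finset (Fin m)) :
    Fsh F σ (X ∩ Y) + Fsh F σ (X ∪ Y) ≤ Fsh F σ X + Fsh F σ Y := by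
  unfold Fsh
  set S := Finset.univ.image σ.1 with hS
  have hinj : Function.Injective σ.1 := Function.Injective.of_comp σ.2.injective
  have hc : S.card = n + 1 := by
    rw [hS, Finset.card_image_of_injective _ hinj]; simp
  have h1 : (X ∪ S) ∩ (Y ∪ S) = X ∩ Y ∪ S := by ext i; simp; tauto
  have h2 : (X ∪ S) ∪ (Y ∪ S) = X ∪ Y ∪ S := by ext i; simp; tauto
  have h3 := hsub (X ∪ S) (Y ∪ S) (by
    rw [h1]
    have := Finset.card_le_card (Finset.subset_union_right (s₁ := X ∩ Y) (s₂ := S))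
    omega)
  rwa [h1, h2] at h3

lemma Hpc_convex {n m : ℕ} {A : Fin m → (Fin n → ℝ)} (F : Finset (Fin m) → ℝ)
    (hsub : ∀ X Y : Finset (Fin m), n ≤ (X ∩ Y).card →
      F (X ∩ Y) + F (X ∪ Y) ≤ F X + F Y) (σ : Simp A) (u v : Fin m → ℝ) (a b : ℝ)
    (ha : 0 ≤ a) (hb : 0 ≤ b) :
    Hpc F σ (a • u + b • v) ≤ a * Hpc F σ u + b * Hpc F σ v := by
  unfold Hpc
  have h : Rsd σ (a • u + b • v) = a • Rsd σ u + b • Rsd σ v := by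
    ext i; simp only [Rsd, interp_comb, Pi.add_apply, Pi.smul_apply, smul_eq_mul]; ring
  have := LF_convex (Fsh F σ) (Fsh_sub F hsub σ) (Rsd σ u) (Rsd σ v) a b ha hb
  rw [h, interp_comb]
  linarith

lemma Hpc_eq {n m : ℕ} {A : Fin m → (Fin n → ℝ)} (F : Finset (Fin m) → ℝ) (τ : Simp A)
    (lam : Fin m → ℝ) (hf : Feas τ lam) :
    Hpc F τ lam = interp τ lam 0 * (F Finset.univ - F ∅) +
      LF F (fun i => lam i - interp τ lam (A i)) := by
  unfold Hpc
  congr 1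
  refine LF_union F _ _ (fun i => ?_) (fun i hi => ?_)
  · simp only [Rsd]; linarith [hf i]
  · obtain ⟨k, -, rfl⟩ := Finset.mem_image.1 hi
    simp [Rsd, interp_vertex]

lemma key_bound {n m : ℕ} (A : Fin m → (Fin n → ℝ)) (F : Finset (Fin m) → ℝ)
    (hsub : ∀ X Y : Finset (Fin m), n ≤ (X ∩ Y).card →
      F (X ∩ Y) + F (X ∪ Y) ≤ F X + F Y) :
    ∃ K : ℝ, 0 ≤ K ∧ ∀ (σ τ : Simp A) (lam : Fin m → ℝ), Feas τ lam →
      Hpc F σ lam ≤ Hpc F τ lam + K * ∑ k, (interp τ lam (A (σ.1 k)) - lam (σ.1 k)) := by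
  obtain ⟨B, hB⟩ : ∃ B : ℝ, ∀ S, |F S| ≤ B := by
    obtain ⟨a, ha⟩ := (Set.finite_range fun S => |F S|).bddAbove
    exact ⟨a, fun i => ha ⟨i, rfl⟩⟩
  have hB0 : 0 ≤ B := (abs_nonneg _).trans (hB ∅)
  obtain ⟨Q1, hQ1⟩ : ∃ Q : ℝ, ∀ p : Simp A × Fin (n + 1) × Fin m,
      |(bas p.1).coord p.2.1 (A p.2.2)| ≤ Q := by
    obtain ⟨a, ha⟩ := (Set.finite_range fun p : Simp A × Fin (n + 1) × Fin m =>
      |(bas p.1).coord p.2.1 (A p.2.2)|).bddAbove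
    exact ⟨a, fun i => ha ⟨i, rfl⟩⟩
  obtain ⟨Q2, hQ2⟩ : ∃ Q : ℝ, ∀ p : Simp A × Fin (n + 1),
      |(bas p.1).coord p.2 0| ≤ Q := by
    obtain ⟨a, ha⟩ := (Set.finite_range fun p : Simp A × Fin (n + 1) =>
      |(bas p.1).coord p.2 0|).bddAbove
    exact ⟨a, fun i => ha ⟨i, rfl⟩⟩
  set Q := max 0 (max Q1 Q2) with hQ
  have hQ0 : 0 ≤ Q := le_max_left _ _
  refine ⟨2 * B * Q + m * (2 * B) * Q + m * (2 * B) + m * (2 * B), by positivity, ?_⟩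
  intro σ τ lam hf
  set ε := ∑ k, (interp τ lam (A (σ.1 k)) - lam (σ.1 k)) with hε
  have hnn : ∀ k ∈ Finset.univ, 0 ≤ interp τ lam (A (σ.1 k)) - lam (σ.1 k) :=
    fun k _ => by linarith [hf (σ.1 k)]
  have hε0 : 0 ≤ ε := Finset.sum_nonneg hnn
  have hεk : ∀ k, interp τ lam (A (σ.1 k)) - lam (σ.1 k) ≤ ε := fun k =>
    Finset.single_le_sum hnn (Finset.mem_univ k)
  have hdiff : ∀ x : Fin n → ℝ, (∀ k, |(bas σ).coord k x| ≤ Q) →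
      |interp σ lam x - interp τ lam x| ≤ Q * ε := by
    intro x hx
    rw [aff_eq σ (interp τ lam) x, interp_apply σ, ← Finset.sum_sub_distrib, hε, Finset.mul_sum]
    refine (Finset.abs_sum_le_sum_abs _ _).trans (Finset.sum_le_sum fun k hk => ?_)
    rw [← mul_sub, abs_mul, abs_sub_comm, abs_of_nonneg (hnn k hk)]
    exact mul_le_mul_of_nonneg_right (hx k) (hnn k hk)
  have hd0 := hdiff 0 (fun k => (hQ2 (σ, k)).trans ((le_max_right _ _).trans (le_max_right _ _)))
  have hdA : ∀ i, |interp σ lam (A i) - interp τ lam (A i)| ≤ Q * ε := fun i =>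
    hdiff (A i) (fun k => (hQ1 (σ, k, i)).trans ((le_max_left _ _).trans (le_max_right _ _)))
  have hBσ : ∀ ρ : Simp A, ∀ S, |Fsh F ρ S| ≤ B := fun ρ S => hB _
  have h1 := LF_lip (Fsh F σ) B (hBσ σ) (Fsh_sub F hsub σ) (Rsd σ lam) (Rsd τ lam) (Q * ε) (by
    intro i
    have : Rsd σ lam i - Rsd τ lam i = -(interp σ lam (A i) - interp τ lam (A i)) := by
      simp only [Rsd]; ring
    rw [this, abs_neg]; exact hdA i)
  let v' : Fin m → ℝ := fun i => if i ∈ Finset.univ.image σ.1 then 0 else Rsd τ lam i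
  have hv' : ∀ i, |Rsd τ lam i - v' i| ≤ ε := by
    intro i
    simp only [v']
    split_ifs with hi
    · obtain ⟨k, -, rfl⟩ := Finset.mem_image.1 hi
      simp only [Rsd, sub_zero]
      rw [abs_sub_comm, abs_of_nonneg (hnn k (Finset.mem_univ k))]
      exact hεk k
    · simpa using hε0
  have hv0 : ∀ i, v' i ≤ 0 := by
    intro i
    simp only [v']
    split_ifs
    · exact le_rfl
    · simp only [Rsd]; linarith [hf i]
  have h2 := LF_lip (Fsh F σ) B (hBσ σ) (Fsh_sub F hsub σ) (Rsd τ lam) v' ε hv'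
  have h3 := LF_lip (Fsh F τ) B (hBσ τ) (Fsh_sub F hsub τ) v' (Rsd τ lam) ε
    (fun i => by rw [abs_sub_comm]; exact hv' i)
  have h4 : LF (Fsh F σ) v' = LF F v' := by
    refine LF_union F v' _ hv0 fun i hi => ?_
    simp only [v', hi, if_true]
  have h5 : LF (Fsh F τ) v' = LF F v' := by
    refine LF_union F v' _ hv0 fun i hi => ?_
    simp only [v']
    split_ifs
    · rfl
    · obtain ⟨k, -, rfl⟩ := Finset.mem_image.1 hi
      simp [Rsd, interp_vertex]
  have h6 : (interp σ lam 0 - interp τ lam 0) * (F Finset.univ - F ∅) ≤ (Q * ε) * (2 * B) := by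
    refine (le_abs_self _).trans ?_
    rw [abs_mul]
    refine mul_le_mul hd0 ?_ (abs_nonneg _) (by positivity)
    have a1 := abs_le.1 (hB Finset.univ)
    have a2 := abs_le.1 (hB ∅)
    rw [abs_le]; constructor <;> linarith [a1.1, a1.2, a2.1, a2.2]
  unfold Hpc
  rw [h4] at h2
  rw [h5] at h3
  nlinarith [h1, h2, h3, h6]

lemma cell_bound {n m : ℕ} (A : Fin m → (Fin n → ℝ)) (F : Finset (Fin m) → ℝ)
    (hsub : ∀ X Y : Finset (Fin m), n ≤ (X ∩ Y).card →
      F (X ∩ Y) + F (X ∪ Y) ≤ F X + F Y) (Θ : Finset (Simp A)) (hΘ : Θ ∈ goodCells A)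
    (c : ℝ) (hc : 0 ≤ c) :
    ∃ C₀ : ℝ, 0 ≤ C₀ ∧ ∀ C, C₀ ≤ C → ∀ (σ τ : Simp A), σ ∈ Θ → ∀ (lam : Fin m → ℝ), Feas τ lam →
      c * Hpc F σ lam + C * ∫ x in cell Θ, interp σ lam x ≤
        c * Hpc F τ lam + C * ∫ x in cell Θ, interp τ lam x := by
  obtain ⟨K, hK0, hK⟩ := key_bound A F hsub
  rw [mem_goodCells] at hΘ
  have hBpos : ∀ σ ∈ Θ, ∀ k, 0 < ∫ x in cell Θ, (bas σ).coord k x := by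
    intro σ hσ k
    rw [setIntegral_pos_iff_support_of_nonneg_ae]
    · have : Function.support ((bas σ).coord k) ∩ cell Θ = cell Θ := by
        rw [Set.inter_eq_right]
        intro x hx
        exact ((hx σ).1 hσ k).ne'
      rw [this]; exact pos_iff_ne_zero.2 hΘ.2
    · filter_upwards [ae_restrict_mem (cell_meas Θ)] with x hx
      exact ((hx σ).1 hσ k).le
    · exact cell_int hΘ.1 _
  obtain ⟨β, hβ0, hβ⟩ : ∃ β : ℝ, 0 < β ∧ ∀ σ ∈ Θ, ∀ k, β ≤ ∫ x in cell Θ, (bas σ).coord k x := by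
    obtain ⟨p, hp, hmin⟩ := Finset.exists_min_image (Θ ×ˢ (Finset.univ : Finset (Fin (n + 1))))
      (fun p => ∫ x in cell Θ, (bas p.1).coord p.2 x) (hΘ.1.product Finset.univ_nonempty)
    rw [Finset.mem_product] at hp
    exact ⟨_, hBpos p.1 hp.1 p.2, fun σ hσ k => hmin (σ, k) (by simp [hσ])⟩
  refine ⟨c * K / β, by positivity, ?_⟩
  intro C hC σ τ hσ lam hf
  have hC0 : 0 ≤ C := le_trans (by positivity) hC
  rw [div_le_iff₀ hβ0] at hC
  set ε := ∑ k, (interp τ lam (A (σ.1 k)) - lam (σ.1 k)) with hε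
  have hnn : ∀ k ∈ Finset.univ, 0 ≤ interp τ lam (A (σ.1 k)) - lam (σ.1 k) :=
    fun k _ => by linarith [hf (σ.1 k)]
  have hε0 : 0 ≤ ε := Finset.sum_nonneg hnn
  have hint : ∀ γ : (Fin n → ℝ) →ᵃ[ℝ] ℝ, ∫ x in cell Θ, γ x =
      ∑ k, (∫ x in cell Θ, (bas σ).coord k x) * γ (A (σ.1 k)) := by
    intro γ
    rw [integral_congr_ae (g := fun x => ∑ k, (bas σ).coord k x * γ (A (σ.1 k)))
      (Filter.Eventually.of_forall fun x => aff_eq σ γ x), integral_finsetSum]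
    · simp_rw [integral_mul_const]
    · intro k _
      exact (cell_int hΘ.1 _).mul_const _
  have h1 : β * ε ≤ (∫ x in cell Θ, interp τ lam x) - ∫ x in cell Θ, interp σ lam x := by
    rw [hint (interp τ lam), hint (interp σ lam), ← Finset.sum_sub_distrib, hε, Finset.mul_sum]
    refine Finset.sum_le_sum fun k hk => ?_
    rw [interp_vertex, ← mul_sub]
    exact mul_le_mul_of_nonneg_right (hβ σ hσ k) (hnn k hk)
  have h2 := mul_le_mul_of_nonneg_left (hK σ τ lam hf) hc
  have h3 := mul_le_mul_of_nonneg_left h1 hC0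
  have h4 := mul_le_mul_of_nonneg_right hC hε0
  nlinarith [h2, h3, h4]

/-- If `F` is submodular on large sets, then the basecondary function becomes convex
upon adding a sufficiently large multiple of the support function of the secondary
polytope. -/
theorem basecondary_convex_after_adding_secondary (n m : ℕ) (hm : 1 < m)
    (A : Fin m → (Fin n → ℝ)) (hA : 1 ≤ n → Function.Injective A)
    (F : Finset (Fin m) → ℝ)
    (hsub : ∀ X Y : Finset (Fin m), n ≤ (X ∩ Y).card →
      F (X ∩ Y) + F (X ∪ Y) ≤ F X + F Y) :
    ∃ C₀ : ℝ, 0 ≤ C₀ ∧ ∀ C : ℝ, C₀ ≤ C →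
      ConvexOn ℝ Set.univ fun lam => basecondary A F lam + C * secondarySupport A lam := by
  classical
  have hcell : ∀ Θ ∈ goodCells A, ∃ C₀ : ℝ, 0 ≤ C₀ ∧ ∀ C, C₀ ≤ C → ∀ (σ τ : Simp A), σ ∈ Θ →
      ∀ (lam : Fin m → ℝ), Feas τ lam →
      (n.factorial * (volume (cell Θ)).toReal) * Hpc F σ lam + C * ∫ x in cell Θ, interp σ lam x ≤
        (n.factorial * (volume (cell Θ)).toReal) * Hpc F τ lam +
          C * ∫ x in cell Θ, interp τ lam x :=
    fun Θ hΘ => cell_bound A F hsub Θ hΘ _ (by positivity)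
  choose! c hc0 hc using hcell
  refine ⟨∑ Θ ∈ goodCells A, c Θ, Finset.sum_nonneg hc0, fun C hC => ?_⟩
  have hCΘ : ∀ Θ ∈ goodCells A, c Θ ≤ C := fun Θ hΘ =>
    (Finset.single_le_sum hc0 hΘ).trans hC
  have hex : ∀ lam : Fin m → ℝ, ∀ Θ ∈ goodCells A, ∃ a : (Fin n → ℝ) →ᵃ[ℝ] ℝ,
      ∃ τ ∈ Θ, Feas τ lam ∧ a = interp τ lam := by
    intro lam Θ hΘ
    obtain ⟨τ, hτ, hf⟩ := exists_feas hΘ lam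
    exact ⟨_, τ, hτ, hf, rfl⟩
  choose! a ha using hex
  have hform : ∀ lam, basecondary A F lam + C * secondarySupport A lam =
      ∑ Θ ∈ goodCells A, ((n.factorial * (volume (cell Θ)).toReal) *
      (a lam Θ 0 * (F Finset.univ - F ∅) + LF F (fun i => lam i - a lam Θ (A i))) +
        C * ∫ x in cell Θ, a lam Θ x) := by
    intro lam
    rw [base_formula A F lam (a lam) (ha lam), sec_formula A lam (a lam) (ha lam),
      Finset.mul_sum, ← Finset.sum_add_distrib]
  refine ⟨convex_univ, ?_⟩
  intro u _ v _ s t hs ht _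
  simp only [hform, smul_eq_mul, Finset.mul_sum, ← Finset.sum_add_distrib]
  refine Finset.sum_le_sum fun Θ hΘ => ?_
  obtain ⟨τ, hτ, hf, hae⟩ := ha (s • u + t • v) Θ hΘ
  obtain ⟨τu, hτu, hfu, hau⟩ := ha u Θ hΘ
  obtain ⟨τv, hτv, hfv, hav⟩ := ha v Θ hΘ
  rw [hae, hau, hav, ← Hpc_eq F τ _ hf, ← Hpc_eq F τu _ hfu, ← Hpc_eq F τv _ hfv]
  have hu := hc Θ hΘ C (hCΘ Θ hΘ) τ τu hτ u hfu
  have hv := hc Θ hΘ C (hCΘ Θ hΘ) τ τv hτ v hfv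
  have hH := mul_le_mul_of_nonneg_left (Hpc_convex F hsub τ u v s t hs ht)
    (show 0 ≤ (n.factorial * (volume (cell Θ)).toReal : ℝ) by positivity)
  have hI : ∫ x in cell Θ, interp τ (s • u + t • v) x =
      s * (∫ x in cell Θ, interp τ u x) + t * ∫ x in cell Θ, interp τ v x := by
    have hne := (mem_goodCells.1 hΘ).1
    simp_rw [interp_comb]
    rw [integral_add ((cell_int hne _).const_mul _) ((cell_int hne _).const_mul _),
      integral_const_mul, integral_const_mul]
  rw [hI]
  have hu' := mul_le_mul_of_nonneg_left hu hs
  have hv' := mul_le_mul_of_nonneg_left hv ht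
  linarith
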